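/- For every integer m ≥ 0, the constant term (the coefficient of q⁰ in the Laurent expansion in q, valid for 0 < |q| < 1) of the function E*(2τ)·( h(τ)^{m+2} − 64·h(τ)^{m} ) vanishes. -/

import Mathlib

noncomputable section
open Complex Real

/-- `q = e^{2πiτ}`. -/
def nome (τ : ℂ) : ℂ := Complex.exp (2 * (π : ℂ) * I * τ)

/-- Dedekind eta function `η(τ) = e^{πiτ/12} ∏_{n≥1} (1 − qⁿ)`. -/
def dedekindEta (τ : ℂ) : ℂ :=
  Complex.exp ((π : ℂ) * I * τ / 12) * ∏' n : ℕ, (1 - nome τ ^ (n + 1))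

/-- Sum of the positive odd divisors of `n`. -/
def sigmaOdd (n : ℕ) : ℕ := ∑ d ∈ n.divisors.filter (fun d => Odd d), d

/-- `E*(τ) = 1 + 24 Σ_{n≥1} σ_odd(n) qⁿ`. -/
def Estar (τ : ℂ) : ℂ := 1 + 24 * ∑' n : ℕ, (sigmaOdd (n + 1) : ℂ) * nome τ ^ (n + 1)

/-- `h(τ) = (η(2τ)⁴/η(4τ)⁸)·E*(2τ)`. -/
def hfun (τ : ℂ) : ℂ := dedekindEta (2 * τ) ^ 4 / dedekindEta (4 * τ) ^ 8 * Estar (2 * τ)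

open UpperHalfPlane hiding I
open ModularForm EisensteinSeries Filter Topology

lemma aux_eta_eq (z : ℂ) : dedekindEta z = ModularForm.eta z := by
  unfold dedekindEta ModularForm.eta
  simp only [ModularForm.eta_q, Function.Periodic.qParam, nome]
  congr 1
  · congr 1
    push_cast
    ring
  · simp

lemma aux_nome_norm {z : ℂ} (hz : 0 < z.im) : ‖nome z‖ < 1 := by
  have := UpperHalfPlane.norm_exp_two_pi_I_lt_one ⟨z, hz⟩
  simpa [nome] using this

lemma aux_nome_two (z : ℂ) : nome (2 * z) = nome z ^ 2 := by
  unfold nome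
  rw [← Complex.exp_nat_mul]
  congr 1
  push_cast
  ring

lemma aux_nome_add_one (z : ℂ) : nome (z + 1) = nome z := by
  unfold nome
  rw [mul_add, mul_one, Complex.exp_add, Complex.exp_two_pi_mul_I, mul_one]

lemma aux_nome_ne (z : ℂ) : nome z ≠ 0 := Complex.exp_ne_zero _

/-- half-index divisor sum -/
def auxS (n : ℕ) : ℕ := if Even n then ∑ d ∈ (n / 2).divisors, d else 0

lemma aux_sigma (n : ℕ) (hn : n ≠ 0) :
    ArithmeticFunction.sigma 1 n = sigmaOdd n + 2 * auxS n := by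
  rw [ArithmeticFunction.sigma_one_apply, sigmaOdd, auxS]
  rw [← Finset.sum_filter_add_sum_filter_not n.divisors (fun d => Odd d)]
  congr 1
  split_ifs with h
  · obtain ⟨k, rfl⟩ := h
    have hk : (k + k) / 2 = k := by omega
    rw [hk, Finset.mul_sum]
    symm
    apply Finset.sum_bij (fun d _ => 2 * d)
    · intro d hd
      simp only [Nat.mem_divisors, Finset.mem_filter] at hd ⊢
      refine ⟨⟨?_, hn⟩, by simp⟩
      rw [← two_mul]
      exact Nat.mul_dvd_mul_left 2 hd.1
    · intro a _ b _ h
      omega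
    · intro b hb
      simp only [Nat.mem_divisors, Finset.mem_filter, Nat.not_odd_iff_even] at hb
      obtain ⟨⟨h1, _⟩, ⟨c, rfl⟩⟩ := hb
      refine ⟨c, ?_, by omega⟩
      rw [← two_mul, ← two_mul] at h1
      simp only [Nat.mem_divisors]
      exact ⟨Nat.dvd_of_mul_dvd_mul_left two_pos h1, by omega⟩
    · intro a _
      rfl
  · rw [mul_zero]
    apply Finset.sum_eq_zero
    intro d hd
    simp only [Nat.mem_divisors, Finset.mem_filter, Nat.not_odd_iff_even] at hd
    exact absurd (hd.2.trans_dvd hd.1.1) h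

lemma aux_summable_sigma {q : ℂ} (hq : ‖q‖ < 1) :
    Summable (fun n : ℕ => (ArithmeticFunction.sigma 1 n : ℂ) * q ^ n) := by
  have h := summable_norm_pow_mul_geometric_of_norm_lt_one (R := ℂ) 2 hq
  refine Summable.of_norm_bounded h fun n => ?_
  rw [norm_mul, norm_mul]
  gcongr
  simp only [Complex.norm_natCast, norm_pow]
  exact_mod_cast ArithmeticFunction.sigma_le_pow_succ 1 n

lemma aux_sum_odd {q : ℂ} (hq : ‖q‖ < 1) :
    HasSum (fun n : ℕ => (sigmaOdd (n + 1) : ℂ) * q ^ (n + 1))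
      ((∑' n : ℕ, (ArithmeticFunction.sigma 1 n : ℂ) * q ^ n)
        - 2 * ∑' n : ℕ, (ArithmeticFunction.sigma 1 n : ℂ) * (q ^ 2) ^ n) := by
  have hq2 : ‖q ^ 2‖ < 1 := by
    rw [norm_pow]
    exact pow_lt_one₀ (norm_nonneg _) hq two_ne_zero
  have h1 := (aux_summable_sigma hq).hasSum
  have h2 := (aux_summable_sigma hq2).hasSum
  have h3 : HasSum (fun n : ℕ => (auxS n : ℂ) * q ^ n)
      (∑' n : ℕ, (ArithmeticFunction.sigma 1 n : ℂ) * (q ^ 2) ^ n) := by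
    have hinj : Function.Injective (fun n : ℕ => 2 * n) := fun a b h => by
      simpa using h
    rw [← hinj.hasSum_iff]
    · convert h2 using 1
      funext n
      simp [auxS, ArithmeticFunction.sigma_one_apply, pow_mul]
    · intro x hx
      have : ¬ Even x := by
        rintro ⟨c, rfl⟩
        exact hx ⟨c, by simp; ring⟩
      simp [auxS, this]
  have h4 := h1.sub (h3.mul_left 2)
  rw [← hasSum_nat_add_iff' 1] at h4
  convert! h4 using 1
  · funext n
    rw [aux_sigma (n + 1) (by omega)]
    push_cast
    ring
  · simp [auxS]

lemma aux_E2 (τ : ℍ) : E2 τ = 1 - 24 * ∑' n : ℕ, (ArithmeticFunction.sigma 1 n : ℂ) * nome τ ^ n := by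
  have h := aux_summable_sigma (aux_nome_norm τ.2)
  rw [E2_eq_tsum_cexp, tsum_pnat_eq_tsum_succ (f := fun n ↦ (ArithmeticFunction.sigma 1 n : ℂ) * cexp (2 * π * I * τ) ^ n),
    h.tsum_eq_zero_add]
  simp [nome]

lemma aux_Estar (τ τ2 : ℍ) (h : (τ2 : ℂ) = 2 * τ) : Estar τ = 2 * E2 τ2 - E2 τ := by
  rw [aux_E2, aux_E2, h, aux_nome_two, Estar, (aux_sum_odd (aux_nome_norm τ.2)).tsum_eq]
  ring

lemma aux_eta_S (z : ℂ) (hz : 0 < z.im) : dedekindEta (-1 / z) ^ 8 = z ^ 4 * dedekindEta z ^ 8 := by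
  have hz0 : z ≠ 0 := by
    rintro rfl
    simp at hz
  have he : ModularForm.eta (-1 / z) = (Complex.sqrt I)⁻¹ * (Complex.sqrt z * ModularForm.eta z) := by
    simpa using eta_comp_eq_csqrt_I_inv (show z ∈ upperHalfPlaneSet from hz)
  have hs : ∀ w : ℂ, w ≠ 0 → Complex.sqrt w ^ 8 = w ^ 4 := by
    intro w hw
    have h2 : Complex.sqrt w ^ 2 = w := by
      rw [Complex.sqrt, ← Complex.cpow_nat_mul]
      simp
    calc Complex.sqrt w ^ 8 = (Complex.sqrt w ^ 2) ^ 4 := by ring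
      _ = w ^ 4 := by rw [h2]
  rw [aux_eta_eq, aux_eta_eq, he, mul_pow, mul_pow, inv_pow, hs _ hz0, hs _ I_ne_zero, I_pow_four]
  ring

lemma aux_E2_S (z w : ℍ) (h : (w : ℂ) = -1 / z) : E2 w = (z : ℂ) ^ 2 * E2 z - 6 * I * z / π := by
  have hw : w = ModularGroup.S • z := by
    apply UpperHalfPlane.ext
    rw [h, UpperHalfPlane.modular_S_smul]
    simp [neg_div]
  have hz0 : (z : ℂ) ≠ 0 := z.ne_zero
  have hG := G2_S_transform z
  rw [← hw] at hG
  have hp : (π : ℂ) ≠ 0 := by exact_mod_cast Real.pi_ne_zero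
  simp only [E2, Pi.smul_apply, smul_eq_mul, hG, riemannZeta_two]
  field_simp
  ring

lemma aux_Estar_S (z : ℂ) (hz : 0 < z.im) : Estar (-1 / z) = -(z ^ 2 / 2) * Estar (z / 2) := by
  have hz0 : z ≠ 0 := by
    rintro rfl
    simp at hz
  have hn : 0 < Complex.normSq z := Complex.normSq_pos.mpr hz0
  have hz2 : 0 < (z / 2).im := by
    simp; linarith
  have key : ∀ w : ℂ, 0 < w.im → 0 < (-1 / w).im := by
    intro w hw
    have hw0 : w ≠ 0 := by
      rintro rfl
      simp at hw
    have hn : 0 < Complex.normSq w := Complex.normSq_pos.mpr hw0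
    rw [neg_div, one_div, Complex.neg_im, Complex.inv_im]
    rw [neg_div, neg_neg]
    positivity
  have hz3 : 0 < (-1 / (z / 2)).im := key _ hz2
  have hp : (π : ℂ) ≠ 0 := by exact_mod_cast Real.pi_ne_zero
  have e1 := aux_Estar ⟨-1 / z, key z hz⟩ ⟨-1 / (z / 2), hz3⟩ (by
    show -1 / (z / 2) = 2 * (-1 / z)
    field_simp)
  have e2 := aux_Estar ⟨z / 2, hz2⟩ ⟨z, hz⟩ (by
    show z = 2 * (z / 2)
    ring)
  have e3 := aux_E2_S ⟨z, hz⟩ ⟨-1 / z, key z hz⟩ rfl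
  have e4 := aux_E2_S ⟨z / 2, hz2⟩ ⟨-1 / (z / 2), hz3⟩ rfl
  simp only [] at e1 e2 e3 e4
  rw [e1, e2, e3, e4]
  field_simp
  ring

/-- Euler product -/
def auxPhi (q : ℂ) : ℂ := ∏' n : ℕ, (1 - q ^ (n + 1))

/-- the q-series of `Estar` -/
def auxEps (q : ℂ) : ℂ := 1 + 24 * ∑' n : ℕ, (sigmaOdd (n + 1) : ℂ) * q ^ (n + 1)

lemma aux_phi_zero : auxPhi 0 = 1 := by simp [auxPhi]
lemma aux_eps_zero : auxEps 0 = 1 := by simp [auxEps]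

lemma aux_phi_diff : DifferentiableOn ℂ auxPhi (Metric.ball 0 1) := differentiableOn_tprod_one_sub_pow

lemma aux_phi_ne {q : ℂ} (hq : ‖q‖ < 1) : auxPhi q ≠ 0 := by
  unfold auxPhi
  refine tprod_one_add_ne_zero_of_summable (f := fun n ↦ -q ^ (n + 1)) ?_ ?_
  · intro n h
    have h1 : q ^ (n + 1) = 1 := by linear_combination -h
    have h2 : ‖q ^ (n + 1)‖ < 1 := by
      rw [norm_pow]
      exact pow_lt_one₀ (norm_nonneg _) hq (by omega)
    rw [h1] at h2
    simp at h2
  · simpa using (summable_nat_add_iff 1).mpr (summable_geometric_of_lt_one (norm_nonneg _) hq)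

lemma aux_eps_diff : DifferentiableOn ℂ auxEps (Metric.ball 0 1) := by
  intro q hq
  have hq1 : ‖q‖ < 1 := by simpa using hq
  obtain ⟨r, hr1, hr2⟩ := exists_between hq1
  have hr0 : 0 ≤ r := (norm_nonneg _).trans hr1.le
  have hs : Summable (fun n : ℕ => (sigmaOdd (n + 1) : ℝ) * r ^ (n + 1)) := by
    have := (aux_sum_odd (q := (r : ℂ)) (by simpa [abs_of_nonneg hr0] using hr2)).summable
    exact_mod_cast this
  have hd : DifferentiableOn ℂ (fun q : ℂ => ∑' n : ℕ, (sigmaOdd (n + 1) : ℂ) * q ^ (n + 1))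
      (Metric.ball 0 r) := by
    apply differentiableOn_tsum_of_summable_norm hs (fun n => by fun_prop) Metric.isOpen_ball
    intro n w hw
    have hw1 : ‖w‖ ≤ r := by
      have : ‖w‖ < r := by simpa using hw
      exact this.le
    rw [norm_mul, norm_pow, Complex.norm_natCast]
    gcongr
  have hat := hd.differentiableAt (x := q) (Metric.isOpen_ball.mem_nhds (by simpa using hr1))
  exact ((hat.const_mul 24).const_add 1).differentiableWithinAt

lemma aux_Estar_eps (z : ℂ) : Estar z = auxEps (nome z) := rfl

lemma aux_eta_phi (z : ℂ) : dedekindEta z = Complex.exp ((π : ℂ) * I * z / 12) * auxPhi (nome z) := rfl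

/-- numerator function at the cusp -/
def auxR (q : ℂ) : ℂ := auxEps q ^ 2 * (auxPhi q ^ 8 / auxPhi (q ^ 2) ^ 16) - auxPhi q ^ 24 / auxPhi (q ^ 2) ^ 24

/-- main function -/
def auxF (z : ℂ) : ℂ := Estar z ^ 2 * (dedekindEta z ^ 8 / dedekindEta (2 * z) ^ 16)
  - dedekindEta z ^ 24 / dedekindEta (2 * z) ^ 24 - 64

lemma aux_eta_nome8 (z : ℂ) :
    dedekindEta z ^ 8 / dedekindEta (2 * z) ^ 16 = (nome z)⁻¹ * (auxPhi (nome z) ^ 8 / auxPhi (nome z ^ 2) ^ 16) := by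
  rw [aux_eta_phi, aux_eta_phi, aux_nome_two, mul_pow, mul_pow, mul_div_mul_comm]
  congr 1
  rw [← Complex.exp_nat_mul, ← Complex.exp_nat_mul, ← Complex.exp_sub, nome, ← Complex.exp_neg]
  congr 1
  push_cast
  ring

lemma aux_eta_nome24 (z : ℂ) :
    dedekindEta z ^ 24 / dedekindEta (2 * z) ^ 24 = (nome z)⁻¹ * (auxPhi (nome z) ^ 24 / auxPhi (nome z ^ 2) ^ 24) := by
  rw [aux_eta_phi, aux_eta_phi, aux_nome_two, mul_pow, mul_pow, mul_div_mul_comm]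
  congr 1
  rw [← Complex.exp_nat_mul, ← Complex.exp_nat_mul, ← Complex.exp_sub, nome, ← Complex.exp_neg]
  congr 1
  push_cast
  ring

lemma aux_F_eq (z : ℂ) : auxF z = (nome z)⁻¹ * auxR (nome z) - 64 := by
  rw [auxF, aux_eta_nome8, aux_eta_nome24, aux_Estar_eps, auxR]
  ring

lemma aux_F_add_one (z : ℂ) : auxF (z + 1) = auxF z := by
  rw [aux_F_eq, aux_F_eq, aux_nome_add_one]

lemma aux_R_diff : DifferentiableOn ℂ auxR (Metric.ball 0 1) := by
  have hm : Set.MapsTo (fun q : ℂ => q ^ 2) (Metric.ball 0 1) (Metric.ball 0 1) := by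
    intro q hq
    have hq1 : ‖q‖ < 1 := by simpa using hq
    simpa using pow_lt_one₀ (norm_nonneg _) hq1 two_ne_zero
  have h2 : DifferentiableOn ℂ (fun q : ℂ => auxPhi (q ^ 2)) (Metric.ball 0 1) :=
    aux_phi_diff.comp (by fun_prop) hm
  have hne : ∀ q ∈ Metric.ball (0 : ℂ) 1, auxPhi (q ^ 2) ≠ 0 := fun q hq =>
    aux_phi_ne (by simpa using hm hq)
  exact ((aux_eps_diff.pow 2).mul ((aux_phi_diff.pow 8).div (h2.pow 16) fun q hq => pow_ne_zero _ (hne q hq))).sub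
    ((aux_phi_diff.pow 24).div (h2.pow 24) fun q hq => pow_ne_zero _ (hne q hq))

lemma aux_R_zero : auxR 0 = 0 := by
  simp [auxR, aux_phi_zero, aux_eps_zero]

lemma aux_nome_diff : Differentiable ℂ nome := by
  unfold nome
  fun_prop

lemma aux_F_diff : DifferentiableOn ℂ auxF {z | 0 < z.im} := by
  have h : DifferentiableOn ℂ (fun z => (nome z)⁻¹ * auxR (nome z) - 64) {z | 0 < z.im} := by
    refine DifferentiableOn.sub_const ?_ _
    refine (aux_nome_diff.differentiableOn.inv fun z _ => aux_nome_ne z).mul ?_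
    exact aux_R_diff.comp aux_nome_diff.differentiableOn fun z hz => by
      simpa using aux_nome_norm hz
  exact h.congr fun z _ => aux_F_eq z

lemma aux_eta_ne (z : ℂ) (hz : 0 < z.im) : dedekindEta z ≠ 0 := by
  rw [aux_eta_eq]
  exact eta_ne_zero hz

/-- Fricke involution. -/
lemma aux_F_S (z : ℂ) (hz : 0 < z.im) :
    auxF (-1 / z) = 64 * (dedekindEta z ^ 24 / dedekindEta (z / 2) ^ 24) * auxF (z / 2) := by
  have hz0 : z ≠ 0 := by
    rintro rfl
    simp at hz
  have hz2 : 0 < (z / 2).im := by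
    simp; linarith
  have h1 := aux_eta_S z hz
  have h2 := aux_eta_S (z / 2) hz2
  have h3 : 2 * (-1 / z) = -1 / (z / 2) := by field_simp
  have h4 : 2 * (z / 2) = z := by ring
  have n1 := aux_eta_ne z hz
  have n2 := aux_eta_ne _ hz2
  rw [auxF, auxF, h3, h4, aux_Estar_S z hz]
  have e1 : ∀ x : ℂ, x ^ 24 = (x ^ 8) ^ 3 := fun x => by ring
  have e2 : ∀ x : ℂ, x ^ 16 = (x ^ 8) ^ 2 := fun x => by ring
  simp only [e1, e2, h1, h2]
  field_simp
  ring

lemma aux_nome_tendsto : Tendsto nome (comap Complex.im atTop) (𝓝[≠] 0) := by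
  have h := Function.Periodic.qParam_tendsto (h := 1) one_pos
  refine h.congr fun z => ?_
  simp [Function.Periodic.qParam, nome]

lemma aux_F_tendsto : ∃ L : ℂ, Tendsto auxF (comap Complex.im atTop) (𝓝 L) := by
  have hd : HasDerivAt auxR (deriv auxR 0) 0 :=
    (aux_R_diff.differentiableAt (Metric.ball_mem_nhds 0 one_pos)).hasDerivAt
  have h1 := (hasDerivAt_iff_tendsto_slope.mp hd).comp aux_nome_tendsto
  refine ⟨deriv auxR 0 - 64, (h1.sub_const 64).congr fun z => ?_⟩
  rw [aux_F_eq]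
  simp [slope_def_field, aux_R_zero, div_eq_inv_mul]

lemma aux_F_S_tendsto : Tendsto (fun z => auxF (-1 / z)) (comap Complex.im atTop) (𝓝 0) := by
  obtain ⟨L, hL⟩ := aux_F_tendsto
  have hhalf : Tendsto (fun z : ℂ => z / 2) (comap Complex.im atTop) (comap Complex.im atTop) := by
    rw [tendsto_comap_iff]
    have : (Complex.im ∘ fun z : ℂ => z / 2) = (fun x : ℝ => x / 2) ∘ Complex.im := by
      funext z
      simp
    rw [this]
    exact (tendsto_id.atTop_div_const two_pos).comp tendsto_comap
  have hn : Tendsto nome (comap Complex.im atTop) (𝓝 0) :=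
    aux_nome_tendsto.mono_right nhdsWithin_le_nhds
  have hphi : ContinuousAt auxPhi 0 :=
    (aux_phi_diff.differentiableAt (Metric.ball_mem_nhds 0 one_pos)).continuousAt
  have hphi1 : Tendsto (fun z => auxPhi (nome z)) (comap Complex.im atTop) (𝓝 1) := by
    have := hphi.tendsto.comp hn
    rwa [aux_phi_zero] at this
  have hphi2 : Tendsto (fun z => auxPhi (nome z ^ 2)) (comap Complex.im atTop) (𝓝 1) := by
    have h2 : Tendsto (fun z => nome z ^ 2) (comap Complex.im atTop) (𝓝 0) := by
      simpa using hn.pow 2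
    have := hphi.tendsto.comp h2
    rwa [aux_phi_zero] at this
  have hG : Tendsto (fun z => 64 * (nome z * (auxPhi (nome z ^ 2) ^ 24 / auxPhi (nome z) ^ 24)) * auxF z)
      (comap Complex.im atTop) (𝓝 0) := by
    have := ((hn.mul ((hphi2.pow 24).div (hphi1.pow 24) (by simp))).const_mul 64).mul hL
    simpa using this
  refine (hG.comp hhalf).congr' ?_
  have hpos : ∀ᶠ z : ℂ in comap Complex.im atTop, 0 < z.im := tendsto_comap.eventually_gt_atTop 0
  filter_upwards [hpos] with z hz
  rw [aux_F_S z hz]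
  have h := aux_eta_nome24 (z / 2)
  rw [show 2 * (z / 2) = z by ring] at h
  have h' : dedekindEta z ^ 24 / dedekindEta (z / 2) ^ 24
    = nome (z / 2) * (auxPhi (nome (z / 2) ^ 2) ^ 24 / auxPhi (nome (z / 2)) ^ 24) := by
    rw [← inv_div, h, mul_inv, inv_inv, inv_div]
  simp only [Function.comp, h']

lemma aux_F_S_add_two (z : ℂ) (hz : 0 < z.im) : auxF (-1 / (z + 2)) = auxF (-1 / z) := by
  rw [aux_F_S z hz, aux_F_S (z + 2) (by simpa using hz)]
  have h1 : (z + 2) / 2 = z / 2 + 1 := by ring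
  have h := aux_eta_nome24 (z / 2)
  rw [show 2 * (z / 2) = z by ring] at h
  have h' := aux_eta_nome24 (z / 2 + 1)
  rw [show 2 * (z / 2 + 1) = z + 2 by ring] at h'
  rw [h1, aux_F_add_one]
  rw [← inv_div, h', ← inv_div (dedekindEta (z / 2) ^ 24), h, aux_nome_add_one]

/-- level one norm -/
def auxP (z : ℂ) : ℂ := auxF z * (auxF (-1 / z) * auxF (-1 / (z + 1)))

lemma aux_P_T (z : ℂ) (hz : 0 < z.im) : auxP (z + 1) = auxP z := by
  have := aux_F_S_add_two z hz
  rw [auxP, auxP, aux_F_add_one, show z + 1 + 1 = z + 2 by ring, this]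
  ring

lemma aux_im_ne {z : ℂ} (hz : 0 < z.im) : z ≠ 0 := by
  rintro rfl
  simp at hz

lemma aux_P_S (z : ℂ) (hz : 0 < z.im) : auxP (-1 / z) = auxP z := by
  have hz0 := aux_im_ne hz
  have hz1 : z - 1 ≠ 0 := aux_im_ne (by simpa using hz)
  have h := aux_F_S_add_two (z - 1) (by simpa using hz)
  have h3 : auxF (-1 / (-1 / z + 1)) = auxF (-1 / (z + 1)) := by
    rw [show z + 1 = z - 1 + 2 by ring, h, ← aux_F_add_one (-1 / (-1 / z + 1))]
    congr 1
    have e : -1 / z + 1 = (z - 1) / z := by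
      field_simp
      ring
    rw [e]
    field_simp
    ring
  rw [auxP, auxP, h3, show -1 / (-1 / z) = z by field_simp]
  ring

lemma aux_im_S {w : ℂ} (hw : 0 < w.im) : 0 < (-1 / w).im := by
  have hn : 0 < Complex.normSq w := Complex.normSq_pos.mpr (aux_im_ne hw)
  rw [neg_div, one_div, Complex.neg_im, Complex.inv_im, neg_div, neg_neg]
  positivity

lemma aux_FS_diff : DifferentiableOn ℂ (fun z => auxF (-1 / z)) {z | 0 < z.im} := by
  refine aux_F_diff.comp (t := {z : ℂ | 0 < z.im}) ?_ fun z hz => aux_im_S hz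
  exact (differentiableOn_const _).div differentiableOn_id fun z hz => aux_im_ne hz

lemma aux_FS1_diff : DifferentiableOn ℂ (fun z => auxF (-1 / (z + 1))) {z | 0 < z.im} := by
  refine aux_FS_diff.comp (t := {z : ℂ | 0 < z.im}) (f := fun z : ℂ => z + 1) (by fun_prop) fun z hz => ?_
  simpa using hz

lemma aux_P_diff : DifferentiableOn ℂ auxP {z | 0 < z.im} :=
  aux_F_diff.mul (aux_FS_diff.mul aux_FS1_diff)

lemma aux_P_tendsto : Tendsto auxP (comap Complex.im atTop) (𝓝 0) := by
  obtain ⟨L, hL⟩ := aux_F_tendsto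
  have h1 : Tendsto (fun z : ℂ => z + 1) (comap Complex.im atTop) (comap Complex.im atTop) := by
    rw [tendsto_comap_iff]
    have : (Complex.im ∘ fun z : ℂ => z + 1) = Complex.im := by
      funext z
      simp
    rw [this]
    exact tendsto_comap
  have := hL.mul (aux_F_S_tendsto.mul (aux_F_S_tendsto.comp h1))
  simpa using! this

lemma aux_P_slash (γ : Matrix.SpecialLinearGroup (Fin 2) ℤ) :
    (fun z : ℍ => auxP z) ∣[(0 : ℤ)] γ = fun z : ℍ => auxP z := by
  apply SlashInvariantForm.slash_action_generators_SL2Z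
  · ext z
    rw [ModularForm.SL_slash_apply, UpperHalfPlane.modular_S_smul]
    simp only [neg_zero, zpow_zero, mul_one]
    rw [← aux_P_S z z.2]
    simp [neg_div]
  · ext z
    rw [ModularForm.SL_slash_apply, UpperHalfPlane.modular_T_smul]
    simp only [neg_zero, zpow_zero, mul_one]
    rw [← aux_P_T z z.2]
    simp [add_comm]

lemma aux_P_zeroAt : IsZeroAtImInfty (fun z : ℍ => auxP z) :=
  aux_P_tendsto.comp tendsto_coe_atImInfty

/-- `auxP` as a modular form -/
def auxPForm : ModularForm (Matrix.SpecialLinearGroup.mapGL (n := Fin 2) (R := ℤ) ℝ).range 0 where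
  toFun := fun z : ℍ => auxP z
  slash_action_eq' A hA := by
    obtain ⟨A, rfl⟩ := hA
    exact aux_P_slash A
  holo' := by
    rw [UpperHalfPlane.mdifferentiable_iff]
    refine aux_P_diff.congr fun z hz ↦ ?_
    simp [ofComplex_apply_of_im_pos hz]
  bdd_at_cusps' hc := by
    rw [Subgroup.IsArithmetic.isCusp_iff_isCusp_SL2Z] at hc
    rw [OnePoint.isBoundedAt_iff_forall_SL2Z hc]
    intro γ _
    rw [aux_P_slash]
    exact aux_P_zeroAt.isBoundedAtImInfty

lemma aux_P_zero (z : ℂ) (hz : 0 < z.im) : auxP z = 0 := by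
  obtain ⟨c, hc⟩ := ModularFormClass.levelOne_weight_zero_const auxPForm
  have hc' : ∀ w : ℍ, auxP w = c := fun w => congrFun hc w
  have h1 : Tendsto (fun w : ℍ => auxP w) atImInfty (𝓝 c) := by
    simp only [hc']
    exact tendsto_const_nhds
  have h2 := tendsto_nhds_unique h1 aux_P_zeroAt
  rw [← h2]
  exact hc' ⟨z, hz⟩

lemma aux_F_zero (z : ℂ) (hz : 0 < z.im) : auxF z = 0 := by
  have ho : IsOpen {z : ℂ | 0 < z.im} := isOpen_lt continuous_const Complex.continuous_im
  have hU : IsPreconnected {z : ℂ | 0 < z.im} := (convex_halfSpace_im_gt 0).isPreconnected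
  have key := AnalyticOnNhd.eq_zero_or_eq_zero_of_mul_eq_zero (aux_F_diff.analyticOnNhd ho)
    ((aux_FS_diff.mul aux_FS1_diff).analyticOnNhd ho) (fun w hw => aux_P_zero w hw) hU
  have fromS : (∀ w ∈ {z : ℂ | 0 < z.im}, auxF (-1 / w) = 0) → auxF z = 0 := by
    intro h
    have := h (-1 / z) (aux_im_S hz)
    rwa [show -1 / (-1 / z) = z by field_simp [aux_im_ne hz]] at this
  rcases key with h | h
  · exact h z hz
  · have key2 := AnalyticOnNhd.eq_zero_or_eq_zero_of_mul_eq_zero (aux_FS_diff.analyticOnNhd ho)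
      (aux_FS1_diff.analyticOnNhd ho) (fun w hw => h w hw) hU
    rcases key2 with h | h
    · exact fromS h
    · apply fromS
      intro w hw
      have := h (w - 1) (by simpa using hw)
      simpa using this

lemma aux_eta_deriv (z : ℍ) :
    HasDerivAt dedekindEta (dedekindEta z * ((π : ℂ) * I / 12 * E2 z)) z := by
  have h0 : dedekindEta = ModularForm.eta := funext aux_eta_eq
  rw [h0]
  have h1 := (differentiableAt_eta_of_mem_upperHalfPlaneSet (show (z : ℂ) ∈ upperHalfPlaneSet from z.2)).hasDerivAt
  have h2 := logDeriv_eta_eq_E2 z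
  have h3 : ModularForm.eta z ≠ 0 := eta_ne_zero z.2
  rw [logDeriv_apply, div_eq_iff h3] at h2
  rw [h2, mul_comm] at h1
  exact h1

/-- the Hauptmodul -/
def auxT (z : ℂ) : ℂ := dedekindEta z ^ 24 / dedekindEta (2 * z) ^ 24

lemma aux_im_two {z : ℂ} (hz : 0 < z.im) : 0 < (2 * z).im := by
  simpa using hz

lemma aux_T_deriv (z : ℂ) (hz : 0 < z.im) :
    HasDerivAt auxT (-(2 * (π : ℂ) * I) * Estar z * auxT z) z := by
  have h1 := aux_eta_deriv ⟨z, hz⟩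
  have h2 := aux_eta_deriv ⟨2 * z, aux_im_two hz⟩
  have hE := aux_Estar ⟨z, hz⟩ ⟨2 * z, aux_im_two hz⟩ rfl
  have n1 := aux_eta_ne z hz
  have n2 := aux_eta_ne _ (aux_im_two hz)
  simp only [] at h1 h2 hE
  have h3 : HasDerivAt (fun w : ℂ => 2 * w) 2 z := by
    simpa using (hasDerivAt_id z).const_mul (2 : ℂ)
  have h4 : HasDerivAt (fun w => dedekindEta (2 * w)) _ z := h2.comp z h3
  have h5 := (h1.pow 24).div (h4.pow 24) (pow_ne_zero 24 n2)
  refine h5.congr_deriv ?_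
  simp only [Pi.pow_apply]
  rw [hE, auxT]
  field_simp
  ring

lemma aux_h_sq (z : ℂ) (hz : 0 < z.im) : hfun z ^ 2 = auxT (2 * z) + 64 := by
  have h := aux_F_zero (2 * z) (aux_im_two hz)
  rw [auxF, show 2 * (2 * z) = 4 * z by ring] at h
  rw [hfun, auxT, show 2 * (2 * z) = 4 * z by ring]
  linear_combination h

lemma aux_h_eq (z : ℂ) : hfun z = (nome z)⁻¹ *
    (auxPhi (nome z ^ 2) ^ 4 / auxPhi (nome z ^ 4) ^ 8) * auxEps (nome z ^ 2) := by
  have h4 : nome (4 * z) = nome z ^ 4 := by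
    rw [show 4 * z = 2 * (2 * z) by ring, aux_nome_two, aux_nome_two]
    ring
  rw [hfun, aux_Estar_eps, aux_eta_phi, aux_eta_phi, aux_nome_two, h4, mul_pow, mul_pow,
    mul_div_mul_comm]
  congr 2
  rw [← Complex.exp_nat_mul, ← Complex.exp_nat_mul, ← Complex.exp_sub, nome, ← Complex.exp_neg]
  congr 1
  push_cast
  ring

lemma aux_h_add_one (z : ℂ) : hfun (z + 1) = hfun z := by
  rw [aux_h_eq, aux_h_eq, aux_nome_add_one]

lemma aux_open : IsOpen {z : ℂ | 0 < z.im} := isOpen_lt continuous_const Complex.continuous_im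

lemma aux_Estar_diff : DifferentiableOn ℂ Estar {z | 0 < z.im} :=
  aux_eps_diff.comp aux_nome_diff.differentiableOn fun z hz => by
    simpa using aux_nome_norm hz

lemma aux_Estar2_diff : DifferentiableOn ℂ (fun z => Estar (2 * z)) {z | 0 < z.im} :=
  aux_Estar_diff.comp (t := {z : ℂ | 0 < z.im}) (f := fun z : ℂ => 2 * z) (by fun_prop)
    fun z hz => aux_im_two hz

lemma aux_eta_diff : DifferentiableOn ℂ dedekindEta {z | 0 < z.im} := fun z hz =>
  (aux_eta_deriv ⟨z, hz⟩).differentiableAt.differentiableWithinAt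

lemma aux_h_diff : DifferentiableOn ℂ hfun {z | 0 < z.im} := by
  have h2 : DifferentiableOn ℂ (fun z => dedekindEta (2 * z)) {z | 0 < z.im} :=
    aux_eta_diff.comp (t := {z : ℂ | 0 < z.im}) (f := fun z : ℂ => 2 * z) (by fun_prop)
      fun z hz => aux_im_two hz
  have i4 : ∀ z : ℂ, 0 < z.im → 0 < (4 * z).im := fun z hz => by simpa using hz
  have h4 : DifferentiableOn ℂ (fun z => dedekindEta (4 * z)) {z | 0 < z.im} :=
    aux_eta_diff.comp (t := {z : ℂ | 0 < z.im}) (f := fun z : ℂ => 4 * z) (by fun_prop)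
      fun z hz => i4 z hz
  exact ((h2.pow 4).div (h4.pow 8) fun z hz => pow_ne_zero _ (aux_eta_ne _ (i4 z hz))).mul aux_Estar2_diff

/-- The function is a derivative. -/
lemma aux_h_deriv (m : ℕ) (z : ℂ) (hz : 0 < z.im) :
    HasDerivAt (fun w => hfun w ^ (m + 2))
      (-(2 * (π : ℂ) * I * (m + 2)) * (Estar (2 * z) * (hfun z ^ (m + 2) - 64 * hfun z ^ m))) z := by
  have hd := (aux_h_diff.differentiableAt (aux_open.mem_nhds hz)).hasDerivAt
  have h3 : HasDerivAt (fun w : ℂ => 2 * w) 2 z := by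
    simpa using (hasDerivAt_id z).const_mul (2 : ℂ)
  have hT : HasDerivAt (fun w => auxT (2 * w) + 64) _ z :=
    ((aux_T_deriv (2 * z) (aux_im_two hz)).comp z h3).add_const 64
  have hsq := hd.pow 2
  have heq : (fun w => auxT (2 * w) + 64) =ᶠ[𝓝 z] hfun ^ 2 := by
    filter_upwards [aux_open.mem_nhds hz] with w hw
    exact (aux_h_sq w hw).symm
  have hu := (hT.congr_of_eventuallyEq heq.symm).unique hsq
  refine (hd.pow (m + 2)).congr_deriv ?_
  have hh := aux_h_sq z hz
  have hT' : auxT (2 * z) = hfun z ^ 2 - 64 := by linear_combination -hh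
  rw [hT'] at hu
  simp only [Nat.cast_ofNat, Nat.add_one_sub_one, pow_one] at hu
  rw [show m + 2 - 1 = m + 1 by omega]
  push_cast
  linear_combination (-(m + 2) / 2 * hfun z ^ m) * hu

lemma aux_nome_zpow (x : ℝ) (n : ℤ) :
    nome ((x : ℂ) + I) ^ n = nome I ^ n * Complex.exp (2 * π * I * n * x) := by
  rw [nome, nome, ← Complex.exp_int_mul, ← Complex.exp_int_mul, ← Complex.exp_add]
  congr 1
  ring

lemma aux_integral (n : ℤ) :
    ∫ x in (0 : ℝ)..1, Complex.exp (2 * π * I * n * x) = if n = 0 then 1 else 0 := by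
  split_ifs with h
  · simp [h]
  · have hp : (π : ℂ) ≠ 0 := by exact_mod_cast Real.pi_ne_zero
    have hc : (2 * π * I * n : ℂ) ≠ 0 := by
      have : (n : ℂ) ≠ 0 := by exact_mod_cast h
      simp [hp, this]
    rw [integral_exp_mul_complex hc]
    have : Complex.exp (2 * π * I * n * (1 : ℝ)) = 1 := by
      rw [Complex.exp_eq_one_iff]
      exact ⟨n, by push_cast; ring⟩
    rw [this]
    simp

lemma aux_norm_exp (n : ℤ) (x : ℝ) : ‖Complex.exp (2 * π * I * n * x)‖ = 1 := by
  have : (2 * π * I * n * x : ℂ) = ((2 * π * n * x : ℝ) : ℂ) * I := by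
    push_cast
    ring
  rw [this, Complex.norm_exp_ofReal_mul_I]

/-- For every `m ≥ 0`, the constant term (coefficient of `q⁰` in any Laurent expansion
`Σ_{n≥−N} c(n)qⁿ`, valid on `ℍ`) of `E*(2τ)(h(τ)^{m+2} − 64h(τ)^m)` vanishes. -/
theorem stmt14 (m : ℕ) (c : ℤ → ℂ) (N : ℕ) (hsupp : ∀ n : ℤ, n < -(N : ℤ) → c n = 0)
    (hexp : ∀ τ : ℂ, 0 < τ.im →
      HasSum (fun n : ℤ => c n * nome τ ^ n)
        (Estar (2 * τ) * (hfun τ ^ (m + 2) - 64 * hfun τ ^ m))) :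
    c 0 = 0 := by
  have him : ∀ x : ℝ, 0 < ((x : ℂ) + I).im := fun x => by simp
  set F : ℂ → ℂ := fun τ => Estar (2 * τ) * (hfun τ ^ (m + 2) - 64 * hfun τ ^ m) with hF
  -- the integral of `F` along the segment vanishes
  have hFd : DifferentiableOn ℂ F {z | 0 < z.im} :=
    aux_Estar2_diff.mul ((aux_h_diff.pow (m + 2)).sub ((aux_h_diff.pow m).const_mul 64))
  have hFc : Continuous (fun x : ℝ => F ((x : ℂ) + I)) := by
    have h1 : Continuous (fun x : ℝ => (x : ℂ) + I) := by fun_prop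
    exact hFd.continuousOn.comp_continuous h1 him
  have hp : (π : ℂ) ≠ 0 := by exact_mod_cast Real.pi_ne_zero
  have hm : (m : ℂ) + 2 ≠ 0 := by exact_mod_cast (by omega : m + 2 ≠ 0)
  have hk : -(2 * (π : ℂ) * I * (m + 2)) ≠ 0 := by simp [hp, hm]
  have hFint : ∫ x in (0 : ℝ)..1, F ((x : ℂ) + I) = 0 := by
    have hder : ∀ x ∈ Set.uIcc (0 : ℝ) 1, HasDerivAt (fun x : ℝ => hfun ((x : ℂ) + I) ^ (m + 2))
        (-(2 * (π : ℂ) * I * (m + 2)) * F ((x : ℂ) + I)) x := by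
      intro x _
      have h1 := aux_h_deriv m ((x : ℂ) + I) (him x)
      have h2 : HasDerivAt (fun w : ℂ => w + I) 1 (x : ℂ) := (hasDerivAt_id _).add_const I
      have h3 := (HasDerivAt.comp (x : ℂ) h1 h2).comp_ofReal
      simpa using! h3
    have h := intervalIntegral.integral_eq_sub_of_hasDerivAt hder
      ((continuous_const.mul hFc).intervalIntegrable 0 1)
    rw [intervalIntegral.integral_const_mul] at h
    have hper : hfun (((1 : ℝ) : ℂ) + I) = hfun (((0 : ℝ) : ℂ) + I) := by
      rw [← aux_h_add_one (((0 : ℝ) : ℂ) + I)]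
      congr 1
      push_cast
      ring
    rw [hper, sub_self] at h
    exact (mul_eq_zero.mp h).resolve_left hk
  -- termwise integration
  have hsum0 : Summable (fun n : ℤ => ‖c n * nome I ^ n‖) :=
    (hexp I (by simp)).summable.norm
  have key := intervalIntegral.hasSum_integral_of_dominated_convergence
    (μ := MeasureTheory.volume) (a := (0 : ℝ)) (b := 1)
    (F := fun (n : ℤ) (x : ℝ) => c n * nome ((x : ℂ) + I) ^ n)
    (f := fun x : ℝ => F ((x : ℂ) + I))
    (fun n _ => ‖c n * nome I ^ n‖)
    (fun n => by
      simp only [aux_nome_zpow]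
      exact Continuous.aestronglyMeasurable (by fun_prop))
    (fun n => Filter.Eventually.of_forall fun x _ => by
      rw [aux_nome_zpow, ← mul_assoc, norm_mul _ (Complex.exp _), aux_norm_exp, mul_one])
    (Filter.Eventually.of_forall fun x _ => hsum0)
    (by simp)
    (Filter.Eventually.of_forall fun x _ => hexp _ (him x))
  rw [hFint] at key
  have hterm : (fun n : ℤ => ∫ x in (0 : ℝ)..1, c n * nome ((x : ℂ) + I) ^ n)
      = fun n : ℤ => if n = 0 then c 0 else 0 := by
    funext n
    simp only [aux_nome_zpow]
    rw [intervalIntegral.integral_const_mul, intervalIntegral.integral_const_mul, aux_integral]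
    split_ifs with h
    · simp [h]
    · simp
  rw [hterm] at key
  exact (hasSum_ite_eq (0 : ℤ) (c 0)).unique key
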